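/- Suppose the invertible RDS φ on 𝕊¹ is contractible. Then for any fixed x,y∈𝕊¹, for ℙ-almost all ω∈Ω there exists an unbounded increasing sequence (t_n) in 𝕋⁺ such that d(φ(t_n,ω)x,φ(t_n,ω)y)→0 as n→∞. -/

import Mathlib

open MeasureTheory Filter Topology Set ENNReal

noncomputable section

/-- The natural projection `π : ℝ → 𝕊¹ = ℝ/ℤ`. -/
def circleProj (x : ℝ) : UnitAddCircle := (x : UnitAddCircle)

/-- `f` is an orientation-preserving homeomorphism of the circle: it admits a strictly
monotone degree-one lift. -/
def OrientPreserving (f : UnitAddCircle ≃ₜ UnitAddCircle) : Prop :=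
  ∃ F : ℝ → ℝ, StrictMono F ∧ (∀ x : ℝ, F (x + 1) = F x + 1) ∧
    ∀ x : ℝ, f (circleProj x) = circleProj (F x)

/-- The anticlockwise distance `d₊(x,y) = min {r ≥ 0 : π(x' + r) = y}` (`x'` any lift of `x`). -/
def dPlus (x y : UnitAddCircle) : ℝ :=
  sInf {r : ℝ | 0 ≤ r ∧ ∃ x' : ℝ, circleProj x' = x ∧ circleProj (x' + r) = y}

/-- An invertible random dynamical system on the circle, in discrete or continuous time,
driven by a stationary memoryless noise process. -/
structure RDS (Ω : Type) [m : MeasurableSpace Ω] where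
  /-- the time set `𝕋⁺`: either `ℕ ∪ {0}` or `[0,∞)`, viewed inside `ℝ` -/
  T : Set ℝ
  T_cases : T = Set.range (fun n : ℕ => (n : ℝ)) ∨ T = Set.Ici (0 : ℝ)
  /-- the filtration -/
  F : ℝ → MeasurableSpace Ω
  F_le : ∀ t ∈ T, F t ≤ m
  F_mono : ∀ s ∈ T, ∀ t ∈ T, s ≤ t → F s ≤ F t
  /-- the probability measure -/
  P : Measure Ω
  P_prob : IsProbabilityMeasure P
  /-- the time-shift maps on the noise space -/
  θ : ℝ → Ω → Ω
  θ_zero : θ 0 = id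
  θ_add : ∀ s ∈ T, ∀ t ∈ T, θ (s + t) = θ t ∘ θ s
  θ_preserving : ∀ t ∈ T, MeasurePreserving (θ t) P P
  θ_adapted : ∀ s ∈ T, ∀ t ∈ T, @Measurable Ω Ω (F (s + t)) (F s) (θ t)
  θ_indep : ∀ t ∈ T, ∀ E A : Set Ω, MeasurableSet[F t] E →
    MeasurableSet[⨆ s ∈ T, F s] A → P (E ∩ θ t ⁻¹' A) = P E * P A
  /-- the random homeomorphisms -/
  φ : ℝ → Ω → UnitAddCircle ≃ₜ UnitAddCircle
  φ_orient : ∀ t ∈ T, ∀ ω, OrientPreserving (φ t ω)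
  φ_meas : ∀ t ∈ T, @Measurable (Ω × UnitAddCircle) UnitAddCircle
    ((F t).prod inferInstance) inferInstance (fun p => φ t p.1 p.2)
  φ_zero : ∀ ω, φ 0 ω = Homeomorph.refl UnitAddCircle
  φ_cocycle : ∀ s ∈ T, ∀ t ∈ T, ∀ ω x, φ (s + t) ω x = φ t (θ s ω) (φ s ω x)
  φ_cadlag_right : ∀ ω, ∀ t ∈ T, ∀ tn : ℕ → ℝ, (∀ n, tn n ∈ T) → Antitone tn →
    Tendsto tn atTop (𝓝 t) → ∀ (xn : ℕ → UnitAddCircle) (x : UnitAddCircle),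
      Tendsto xn atTop (𝓝 x) →
      Tendsto (fun n => φ (tn n) ω (xn n)) atTop (𝓝 (φ t ω x))
  /-- the left-limit maps -/
  φ_left_lim : ℝ → Ω → UnitAddCircle → UnitAddCircle
  φ_cadlag_left : ∀ ω, ∀ t ∈ T, ∀ tn : ℕ → ℝ, (∀ n, tn n ∈ T) → StrictMono tn →
    Tendsto tn atTop (𝓝 t) → ∀ (xn : ℕ → UnitAddCircle) (x : UnitAddCircle),
      Tendsto xn atTop (𝓝 x) →
      Tendsto (fun n => φ (tn n) ω (xn n)) atTop (𝓝 (φ_left_lim t ω x))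

/-- A probability measure on the circle is atomless if every singleton is null. -/
def Atomless (ρ : Measure UnitAddCircle) : Prop := ∀ x, ρ {x} = 0

/-- A measure on the circle has full support. -/
def FullSupport (ρ : Measure UnitAddCircle) : Prop :=
  ∀ U : Set UnitAddCircle, IsOpen U → U.Nonempty → 0 < ρ U

/-- The (topological) support of a measure on the circle. -/
def msupport (ρ : Measure UnitAddCircle) : Set UnitAddCircle :=
  {x | ∀ U : Set UnitAddCircle, IsOpen U → x ∈ U → 0 < ρ U}

namespace RDS

variable {Ω : Type} [m : MeasurableSpace Ω] (S : RDS Ω)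

/-- the future σ-algebra `𝓕₊ = σ(𝓕_t : t ∈ 𝕋⁺)`. -/
def Fplus : MeasurableSpace Ω := ⨆ t ∈ S.T, S.F t

/-- The filter "t → ∞ along the time set 𝕋⁺". -/
def tFilter : Filter ℝ := atTop ⊓ 𝓟 S.T

/-- two-point contractibility. -/
def Contractible : Prop := ∀ x y : UnitAddCircle, x ≠ y →
  0 < S.P {ω | ∃ t ∈ S.T, dist (S.φ t ω x) (S.φ t ω y) < dist x y}

/-- compressibility. -/
def Compressible : Prop := ∀ x y : UnitAddCircle, x ≠ y →
  0 < S.P {ω | ∃ t ∈ S.T, dPlus (S.φ t ω x) (S.φ t ω y) < dPlus x y}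

/-- `p` is a deterministic fixed point. -/
def DetFixedPoint (p : UnitAddCircle) : Prop :=
  ∀ᵐ ω ∂S.P, ∀ t ∈ S.T, S.φ t ω p = p

/-- `A` is forward-invariant. -/
def ForwardInvariant (A : Set UnitAddCircle) : Prop :=
  ∀ᵐ ω ∂S.P, ∀ t ∈ S.T, ⇑(S.φ t ω) '' A ⊆ A

/-- reverse-minimal dynamics: the only open forward-invariant sets are `∅` and `𝕊¹`. -/
def ReverseMinimal : Prop :=
  ∀ A : Set UnitAddCircle, IsOpen A → S.ForwardInvariant A → A = ∅ ∨ A = Set.univ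

/-- synchronisation. -/
def Synchronising : Prop := ∀ x y : UnitAddCircle,
  S.P {ω | Tendsto (fun t => dist (S.φ t ω x) (S.φ t ω y)) S.tFilter (𝓝 0)} = 1

/-- everywhere local stability. -/
def EverywhereLocallyStable : Prop := ∀ x : UnitAddCircle,
  S.P {ω | ∃ U : Set UnitAddCircle, IsOpen U ∧ x ∈ U ∧
    Tendsto (fun t => volume (⇑(S.φ t ω) '' U)) S.tFilter (𝓝 0)} = 1

/-- stable synchronisation. -/
def StablySynchronising : Prop := S.Synchronising ∧ S.EverywhereLocallyStable

/-- `ρ` is reverse-stationary: `ρ(A) = ∫ ρ(φ(t,ω)A) ℙ(dω)` for all `t ∈ 𝕋⁺`, Borel `A`. -/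
def ReverseStationary (ρ : Measure UnitAddCircle) : Prop :=
  ∀ t ∈ S.T, ∀ A : Set UnitAddCircle, MeasurableSet A →
    ρ A = ∫⁻ ω, ρ (⇑(S.φ t ω) '' A) ∂S.P

/-- `r` is a crack point of `ω`. -/
def CrackPoint (ω : Ω) (r : UnitAddCircle) : Prop :=
  ∀ G : Set UnitAddCircle, IsClosed G → r ∉ G →
    Tendsto (fun t => volume (⇑(S.φ t ω) '' G)) S.tFilter (𝓝 0)

/-- the set of contractive sample points. -/
def Ωc : Set Ω := {ω | ∃ r, S.CrackPoint ω r}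

/-- the reverse transition probabilities `φ̄ₓᵗ(A) = ℙ(ω : φ(t,ω)⁻¹(x) ∈ A)`. -/
def revTrans (t : ℝ) (x : UnitAddCircle) (A : Set UnitAddCircle) : ℝ≥0∞ :=
  S.P {ω | (S.φ t ω).symm x ∈ A}

/-- the forward transition probabilities `φₓᵗ(A) = ℙ(ω : φ(t,ω)x ∈ A)`. -/
def fwdTrans (t : ℝ) (x : UnitAddCircle) (A : Set UnitAddCircle) : ℝ≥0∞ :=
  S.P {ω | S.φ t ω x ∈ A}

/-- `ρ` is stationary for a transition family `ν`. -/
def StationaryFor (ν : ℝ → UnitAddCircle → Set UnitAddCircle → ℝ≥0∞)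
    (ρ : Measure UnitAddCircle) : Prop :=
  ∀ t ∈ S.T, ∀ A : Set UnitAddCircle, MeasurableSet A → ρ A = ∫⁻ x, ν t x A ∂ρ

/-- `ρ` is ergodic for a transition family `ν`. -/
def ErgodicFor (ν : ℝ → UnitAddCircle → Set UnitAddCircle → ℝ≥0∞)
    (ρ : Measure UnitAddCircle) : Prop :=
  S.StationaryFor ν ρ ∧ ∀ A : Set UnitAddCircle, MeasurableSet A →
    (∀ t ∈ S.T, ∀ᵐ x ∂ρ, x ∈ A → ν t x A = 1) → ρ A = 0 ∨ ρ A = 1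

end RDS

section ProofHelpers

theorem indep_prod_formula {Ω Ω' Z : Type} [MeasurableSpace Ω] [MeasurableSpace Ω']
    [MeasurableSpace Z] (P : Measure Ω) [IsProbabilityMeasure P] (Q : Measure Ω')
    [IsProbabilityMeasure Q] (U : Ω → Z) (V : Ω → Ω') (hU : Measurable U) (hV : Measurable V)
    (hind : ∀ E A, MeasurableSet E → MeasurableSet A →
      P (U ⁻¹' E ∩ V ⁻¹' A) = P (U ⁻¹' E) * Q A)
    (B : Set (Z × Ω')) (hB : MeasurableSet B) :
    P {ω | (U ω, V ω) ∈ B} = ∫⁻ ω, Q {w | (U ω, w) ∈ B} ∂P := by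
  have hp : (P.map U).prod Q = P.map (fun ω => (U ω, V ω)) := by
    have : IsProbabilityMeasure (P.map U) := Measure.isProbabilityMeasure_map hU.aemeasurable
    apply Measure.prod_eq
    intro s t hs ht
    rw [Measure.map_apply (hU.prodMk hV) (hs.prod ht), Measure.map_apply hU hs, ← hind s t hs ht]
    rfl
  have h1 : P {ω | (U ω, V ω) ∈ B} = P.map (fun ω => (U ω, V ω)) B := by
    rw [Measure.map_apply (hU.prodMk hV) hB]; rfl
  rw [h1, ← hp, Measure.prod_apply hB, lintegral_map (measurable_measure_prodMk_left hB) hU]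
  rfl

theorem exists_min_dist {K : Set (UnitAddCircle × UnitAddCircle)} (hK : IsCompact K)
    (hne : K.Nonempty) : ∃ w ∈ K, ∀ v ∈ K, dist w.1 w.2 ≤ dist v.1 v.2 := by
  have hc : Continuous fun z : UnitAddCircle × UnitAddCircle => dist z.1 z.2 :=
    continuous_fst.dist continuous_snd
  obtain ⟨w, hw, hmin⟩ := hK.exists_isMinOn hne hc.continuousOn
  exact ⟨w, hw, fun v hv => isMinOn_iff.1 hmin v hv⟩

theorem pair_gen {Ω : Type} [MeasurableSpace Ω] (g : Ω × UnitAddCircle → UnitAddCircle)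
    (hg : Measurable g) :
    Measurable (fun p : (UnitAddCircle × UnitAddCircle) × Ω =>
      (g (p.2, p.1.1), g (p.2, p.1.2))) :=
  (hg.comp (measurable_snd.prodMk (measurable_fst.comp measurable_fst))).prodMk
    (hg.comp (measurable_snd.prodMk (measurable_snd.comp measurable_fst)))

theorem meas_ge_dist (ε : ℝ) :
    MeasurableSet {w : UnitAddCircle × UnitAddCircle | ε ≤ dist w.1 w.2} :=
  measurableSet_le measurable_const (measurable_fst.dist measurable_snd)

theorem meas_lt_dist (ε : ℝ) :
    MeasurableSet {w : UnitAddCircle × UnitAddCircle | dist w.1 w.2 < ε} :=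
  measurableSet_lt (measurable_fst.dist measurable_snd) measurable_const

namespace RDS

variable {Ω : Type} [m : MeasurableSpace Ω] (S : RDS Ω)

/-- The event that the two trajectories never get closer than `ε` at a rational time. -/
def nv (ε : ℝ) (z : UnitAddCircle × UnitAddCircle) : Set Ω :=
  {ω | ∀ q : ℚ, (q : ℝ) ∈ S.T → ε ≤ dist (S.φ q ω z.1) (S.φ q ω z.2)}

theorem zero_mem : (0 : ℝ) ∈ S.T := by
  rcases S.T_cases with h | h <;> rw [h]
  · exact ⟨0, by simp⟩
  · simp

theorem nat_mem (n : ℕ) : (n : ℝ) ∈ S.T := by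
  rcases S.T_cases with h | h <;> rw [h]
  · exact ⟨n, by simp⟩
  · simp

theorem add_mem {s t : ℝ} (hs : s ∈ S.T) (ht : t ∈ S.T) : s + t ∈ S.T := by
  rcases S.T_cases with h | h <;> rw [h] at hs ht ⊢
  · obtain ⟨a, rfl⟩ := hs
    obtain ⟨b, rfl⟩ := ht
    exact ⟨a + b, by simp⟩
  · simp only [mem_Ici] at *
    linarith

theorem nonneg_of_mem {s : ℝ} (hs : s ∈ S.T) : 0 ≤ s := by
  rcases S.T_cases with h | h <;> rw [h] at hs
  · obtain ⟨a, rfl⟩ := hs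
    simp
  · exact hs

theorem F_le_Fplus {t : ℝ} (ht : t ∈ S.T) : S.F t ≤ S.Fplus :=
  le_iSup₂_of_le (f := fun t (_ : t ∈ S.T) => S.F t) t ht le_rfl

theorem Fplus_le : S.Fplus ≤ m := iSup₂_le S.F_le

theorem right_dense {t : ℝ} (ht : t ∈ S.T) : ∃ q : ℕ → ℚ, (∀ n, (q n : ℝ) ∈ S.T) ∧
    Antitone (fun n => (q n : ℝ)) ∧ Tendsto (fun n => (q n : ℝ)) atTop (𝓝 t) := by
  rcases S.T_cases with h | h
  · rw [h] at ht
    obtain ⟨a, rfl⟩ := ht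
    refine ⟨fun _ => a, fun n => ?_, fun _ _ _ => le_rfl, ?_⟩
    · simpa using S.nat_mem a
    · simp
  · obtain ⟨u, hu, hu1, hu2⟩ :=
      Dense.exists_seq_strictAnti_tendsto (Rat.denseRange_cast (𝕜 := ℝ)) t
    choose q hq using fun n => (hu1 n).2
    have ht0 := S.nonneg_of_mem ht
    refine ⟨q, fun n => ?_, ?_, ?_⟩
    · rw [hq, h]
      exact ht0.trans (hu1 n).1.le
    · simp only [hq]; exact hu.antitone
    · simp only [hq]; exact hu2

/-- Joint measurability of the pair, with respect to any σ-algebra containing `F t`. -/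
theorem meas_pair {Ω : Type} (mm : MeasurableSpace Ω) [m : MeasurableSpace Ω] (S : RDS Ω)
    {t : ℝ} (ht : t ∈ S.T) (hm : S.F t ≤ mm) :
    @Measurable ((UnitAddCircle × UnitAddCircle) × Ω) (UnitAddCircle × UnitAddCircle)
      (@Prod.instMeasurableSpace _ _ _ mm) _
      (fun p => (S.φ t p.2 p.1.1, S.φ t p.2 p.1.2)) := by
  have h := S.φ_meas t ht
  have h' : @Measurable (Ω × UnitAddCircle) UnitAddCircle (@Prod.instMeasurableSpace _ _ mm _) _
      (fun p => S.φ t p.1 p.2) :=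
    h.mono (sup_le_sup (MeasurableSpace.comap_mono hm) le_rfl) le_rfl
  exact @pair_gen Ω mm (fun p => S.φ t p.1 p.2) h'

theorem meas_nv_joint {Ω : Type} (mm : MeasurableSpace Ω) [m : MeasurableSpace Ω] (S : RDS Ω)
    (ε : ℝ) (hm : S.Fplus ≤ mm) :
    @MeasurableSet ((UnitAddCircle × UnitAddCircle) × Ω) (@Prod.instMeasurableSpace _ _ _ mm)
      {p | p.2 ∈ S.nv ε p.1} := by
  have : {p : (UnitAddCircle × UnitAddCircle) × Ω | p.2 ∈ S.nv ε p.1} =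
      ⋂ q : ℚ, ⋂ _ : (q : ℝ) ∈ S.T,
        {p | ε ≤ dist (S.φ q p.2 p.1.1) (S.φ q p.2 p.1.2)} := by
    ext p; simp [nv]
  rw [this]
  refine MeasurableSet.iInter fun q => MeasurableSet.iInter fun hq => ?_
  have h1 := S.meas_pair mm hq ((S.F_le_Fplus hq).trans hm)
  exact h1 (meas_ge_dist ε)

theorem meas_nv {Ω : Type} (mm : MeasurableSpace Ω) [m : MeasurableSpace Ω] (S : RDS Ω)
    (ε : ℝ) (hm : S.Fplus ≤ mm)
    (z : UnitAddCircle × UnitAddCircle) : MeasurableSet[mm] (S.nv ε z) :=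
  @measurable_prodMk_left _ _ _ mm z _ (S.meas_nv_joint mm ε hm)

/-- The Markov property. -/
theorem markov (ε : ℝ) {t : ℝ} (ht : t ∈ S.T) (z : UnitAddCircle × UnitAddCircle) :
    S.P {ω | S.θ t ω ∈ S.nv ε (S.φ t ω z.1, S.φ t ω z.2)} =
      ∫⁻ ω, S.P (S.nv ε (S.φ t ω z.1, S.φ t ω z.2)) ∂S.P := by
  have := S.P_prob
  have hU0 : Measurable[S.F t] (fun ω => (S.φ t ω z.1, S.φ t ω z.2)) :=
    (S.meas_pair (S.F t) ht le_rfl).comp (@measurable_prodMk_left _ _ _ (S.F t) z)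
  have hU : Measurable (fun ω => (S.φ t ω z.1, S.φ t ω z.2)) := hU0.mono (S.F_le t ht) le_rfl
  have hV : @Measurable Ω Ω m S.Fplus (S.θ t) :=
    (S.θ_preserving t ht).measurable.mono le_rfl S.Fplus_le
  have : IsProbabilityMeasure (S.P.trim S.Fplus_le) :=
    ⟨by rw [trim_measurableSet_eq _ MeasurableSet.univ]; exact measure_univ⟩
  have key := @indep_prod_formula Ω Ω _ m S.Fplus _ S.P _ (S.P.trim S.Fplus_le) _
    (fun ω => (S.φ t ω z.1, S.φ t ω z.2)) (S.θ t) hU hV (fun E A hE hA => by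
      rw [trim_measurableSet_eq S.Fplus_le hA]
      exact S.θ_indep t ht _ A (hU0 hE) hA) _ (S.meas_nv_joint S.Fplus ε le_rfl)
  refine key.trans (lintegral_congr fun ω => ?_)
  exact trim_measurableSet_eq S.Fplus_le (S.meas_nv S.Fplus ε le_rfl _)

theorem nv_subset (ε : ℝ) (q : ℚ) (hq : (q : ℝ) ∈ S.T) (z : UnitAddCircle × UnitAddCircle) :
    S.nv ε z ⊆ {ω | S.θ q ω ∈ S.nv ε (S.φ q ω z.1, S.φ q ω z.2)} := by
  intro ω hω r hr
  have h := hω (q + r) (by push_cast; exact S.add_mem hq hr)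
  push_cast at h
  rw [S.φ_cocycle q hq r hr, S.φ_cocycle q hq r hr] at h
  exact h

theorem le_lintegral (ε : ℝ) (q : ℚ) (hq : (q : ℝ) ∈ S.T)
    (z : UnitAddCircle × UnitAddCircle) :
    S.P (S.nv ε z) ≤ ∫⁻ ω, S.P (S.nv ε (S.φ q ω z.1, S.φ q ω z.2)) ∂S.P :=
  (measure_mono (S.nv_subset ε q hq z)).trans (S.markov ε hq z).le

theorem nv_empty (ε : ℝ) (z : UnitAddCircle × UnitAddCircle) (hz : dist z.1 z.2 < ε) :
    S.nv ε z = ∅ := by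
  ext ω
  simp only [mem_empty_iff_false, iff_false]
  intro hω
  have := hω 0 (by simpa using S.zero_mem)
  simp [S.φ_zero] at this
  linarith

theorem closed_level (ε : ℝ) (c : ℝ≥0∞) : IsClosed {z | c ≤ S.P (S.nv ε z)} := by
  have := S.P_prob
  apply IsSeqClosed.isClosed
  intro zn z hzn hz
  have hzn' : ∀ n, c ≤ S.P (S.nv ε (zn n)) := hzn
  set B : ℕ → Set Ω := fun k => ⋃ n ≥ k, S.nv ε (zn n) with hB
  have hBm : ∀ k, MeasurableSet (B k) := fun k =>
    MeasurableSet.iUnion fun n => MeasurableSet.iUnion fun _ => S.meas_nv m ε S.Fplus_le _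
  have hBa : Antitone B := by
    intro a b hab ω hω
    simp only [hB, mem_iUnion] at hω ⊢
    obtain ⟨n, hn, h⟩ := hω
    exact ⟨n, le_trans hab hn, h⟩
  have hlim := tendsto_measure_iInter_atTop (μ := S.P) (fun i => (hBm i).nullMeasurableSet) hBa
    ⟨0, measure_ne_top _ _⟩
  have h1 : c ≤ S.P (⋂ n, B n) := by
    refine ge_of_tendsto' hlim fun k => (hzn' k).trans (measure_mono ?_)
    intro ω hω
    simp only [hB, mem_iUnion]
    exact ⟨k, le_rfl, hω⟩
  refine h1.trans (measure_mono ?_)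
  intro ω hω q hq
  by_contra hlt
  push Not at hlt
  have hc : Tendsto (fun n => dist (S.φ q ω (zn n).1) (S.φ q ω (zn n).2)) atTop
      (𝓝 (dist (S.φ q ω z.1) (S.φ q ω z.2))) := by
    have : Continuous fun w : UnitAddCircle × UnitAddCircle =>
        dist (S.φ q ω w.1) (S.φ q ω w.2) :=
      ((S.φ q ω).continuous.comp continuous_fst).dist ((S.φ q ω).continuous.comp continuous_snd)
    exact (this.tendsto z).comp hz
  obtain ⟨k, hk⟩ := eventually_atTop.1 (hc.eventually_lt_const hlt)
  have := mem_iInter.1 hω k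
  simp only [hB, mem_iUnion] at this
  obtain ⟨n, hn, h⟩ := this
  exact absurd (h q hq) (not_le.2 (hk n hn))

theorem meas_lt (c : ℝ) (z : UnitAddCircle × UnitAddCircle) {t : ℝ} (ht : t ∈ S.T) :
    MeasurableSet {ω | dist (S.φ t ω z.1) (S.φ t ω z.2) < c} := by
  have h1 := S.meas_pair m ht (S.F_le t ht)
  exact (h1.comp (measurable_prodMk_left (x := z))) (meas_lt_dist c)

theorem meas_f (ε : ℝ) : Measurable fun z => S.P (S.nv ε z) := by
  have := S.P_prob
  exact measurable_measure_prodMk_left (S.meas_nv_joint m ε S.Fplus_le)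

theorem meas_f_comp (ε : ℝ) (z : UnitAddCircle × UnitAddCircle) {t : ℝ} (ht : t ∈ S.T) :
    Measurable fun ω => S.P (S.nv ε (S.φ t ω z.1, S.φ t ω z.2)) :=
  (S.meas_f ε).comp ((S.meas_pair m ht (S.F_le t ht)).comp (measurable_prodMk_left (x := z)))

variable {S}

theorem contr_rat (h : S.Contractible) (z : UnitAddCircle × UnitAddCircle) (hz : z.1 ≠ z.2) :
    ∃ q : ℚ, (q : ℝ) ∈ S.T ∧
      0 < S.P {ω | dist (S.φ q ω z.1) (S.φ q ω z.2) < dist z.1 z.2} := by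
  by_contra hcon
  push Not at hcon
  have h0 : S.P (⋃ q : ℚ, ⋃ _ : (q : ℝ) ∈ S.T,
      {ω | dist (S.φ q ω z.1) (S.φ q ω z.2) < dist z.1 z.2}) = 0 := by
    simp only [measure_iUnion_null_iff]
    exact fun q hq => le_antisymm (hcon q hq) bot_le
  refine (h z.1 z.2 hz).ne' (measure_mono_null ?_ h0)
  rintro ω ⟨t, ht, hlt⟩
  obtain ⟨q, hq, hqa, hqt⟩ := S.right_dense ht
  have l1 := S.φ_cadlag_right ω t ht _ hq hqa hqt (fun _ => z.1) z.1 tendsto_const_nhds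
  have l2 := S.φ_cadlag_right ω t ht _ hq hqa hqt (fun _ => z.2) z.2 tendsto_const_nhds
  obtain ⟨n, hn⟩ := ((l1.dist l2).eventually_lt_const hlt).exists
  simp only [mem_iUnion]
  exact ⟨q n, hq n, hn⟩

theorem f_lt_one (h : S.Contractible) {ε : ℝ} (hε : 0 < ε)
    (z : UnitAddCircle × UnitAddCircle) : S.P (S.nv ε z) < 1 := by
  have := S.P_prob
  by_contra hz
  push Not at hz
  have hcomp : IsCompact {z | 1 ≤ S.P (S.nv ε z)} := (S.closed_level ε 1).isCompact
  obtain ⟨w, hw, hmin⟩ := exists_min_dist hcomp ⟨z, hz⟩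
  have hw' : 1 ≤ S.P (S.nv ε w) := hw
  have hmin' : ∀ v : UnitAddCircle × UnitAddCircle, 1 ≤ S.P (S.nv ε v) →
      dist w.1 w.2 ≤ dist v.1 v.2 := fun v hv => hmin v hv
  have hne : w.1 ≠ w.2 := by
    intro he
    rw [S.nv_empty ε w (by rw [he, dist_self]; exact hε)] at hw'
    simp at hw'
  obtain ⟨q, hq, hpos⟩ := contr_rat h w hne
  have hint : ∫⁻ ω, S.P (S.nv ε (S.φ q ω w.1, S.φ q ω w.2)) ∂S.P = ∫⁻ _, 1 ∂S.P := by
    apply le_antisymm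
    · exact lintegral_mono fun _ => prob_le_one
    · simpa using hw'.trans (S.le_lintegral ε q hq w)
  have hae := ae_eq_of_ae_le_of_lintegral_le (μ := S.P)
    (f := fun ω => S.P (S.nv ε (S.φ q ω w.1, S.φ q ω w.2))) (g := fun _ => 1)
    (Eventually.of_forall fun _ => prob_le_one) (by rw [hint]; simp)
    aemeasurable_const hint.ge
  have hge : ∀ᵐ ω ∂S.P, ¬ dist (S.φ q ω w.1) (S.φ q ω w.2) < dist w.1 w.2 := by
    filter_upwards [hae] with ω heq
    exact not_lt.2 (hmin' (S.φ q ω w.1, S.φ q ω w.2) heq.ge)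
  rw [ae_iff] at hge
  simp only [not_not] at hge
  exact hpos.ne' hge

theorem f_zero (h : S.Contractible) {ε : ℝ} (hε : 0 < ε)
    (z : UnitAddCircle × UnitAddCircle) : S.P (S.nv ε z) = 0 := by
  have := S.P_prob
  have husc : UpperSemicontinuous fun z => S.P (S.nv ε z) :=
    upperSemicontinuous_iff_isClosed_preimage.2 fun c => S.closed_level ε c
  obtain ⟨w, -, hmax⟩ := UpperSemicontinuousOn.exists_isMaxOn (univ_nonempty) isCompact_univ
    (husc.upperSemicontinuousOn univ)
  have hmax' : ∀ z, S.P (S.nv ε z) ≤ S.P (S.nv ε w) := fun z => hmax (mem_univ z)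
  suffices hM : S.P (S.nv ε w) = 0 by
    exact le_antisymm ((hmax' z).trans hM.le) bot_le
  by_contra hM
  -- a rational time at which the trajectories are close with positive probability
  have hq : ∃ q : ℚ, (q : ℝ) ∈ S.T ∧
      S.P {ω | dist (S.φ q ω w.1) (S.φ q ω w.2) < ε} ≠ 0 := by
    by_contra hcon
    push Not at hcon
    have h0 : S.P (S.nv ε w)ᶜ = 0 := by
      have : S.P (⋃ q : ℚ, ⋃ _ : (q : ℝ) ∈ S.T,
          {ω | dist (S.φ q ω w.1) (S.φ q ω w.2) < ε}) = 0 := by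
        simp only [measure_iUnion_null_iff]
        exact fun q hq => hcon q hq
      refine measure_mono_null ?_ this
      intro ω hω
      simp only [nv, mem_compl_iff, mem_ofPred_eq] at hω
      push Not at hω
      obtain ⟨q, hq, hlt⟩ := hω
      simp only [mem_iUnion]
      exact ⟨q, hq, hlt⟩
    rw [prob_compl_eq_zero_iff (S.meas_nv m ε S.Fplus_le w)] at h0
    exact (f_lt_one h hε w).ne h0
  obtain ⟨q, hq, hpos⟩ := hq
  set E := {ω | dist (S.φ q ω w.1) (S.φ q ω w.2) < ε} with hE
  have hEm : MeasurableSet E := S.meas_lt ε w hq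
  have hle : S.P (S.nv ε w) ≤ S.P (S.nv ε w) * S.P Eᶜ := by
    calc S.P (S.nv ε w) ≤ _ := S.le_lintegral ε q hq w
      _ ≤ ∫⁻ ω, Eᶜ.indicator (fun _ => S.P (S.nv ε w)) ω ∂S.P := by
          refine lintegral_mono fun ω => ?_
          by_cases hω : ω ∈ E
          · have h0 : S.nv ε (S.φ q ω w.1, S.φ q ω w.2) = ∅ :=
              S.nv_empty ε (S.φ q ω w.1, S.φ q ω w.2) hω
            simp [h0]
          · rw [indicator_of_mem (show ω ∈ Eᶜ from hω)]
            exact hmax' _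
      _ = _ := lintegral_indicator_const hEm.compl _
  have hlt : S.P Eᶜ < 1 := by
    refine lt_of_le_of_ne prob_le_one fun he => hpos ?_
    have := (prob_compl_eq_zero_iff hEm.compl).2 he
    rwa [compl_compl] at this
  have : S.P (S.nv ε w) * S.P Eᶜ < S.P (S.nv ε w) * 1 :=
    ENNReal.mul_lt_mul_right hM (measure_ne_top _ _) hlt
  rw [mul_one] at this
  exact absurd hle (not_le.2 this)

theorem ae_close (h : S.Contractible) {ε : ℝ} (hε : 0 < ε) (k : ℕ) (x y : UnitAddCircle) :
    ∀ᵐ ω ∂S.P, ∃ t ∈ S.T, (k : ℝ) ≤ t ∧ dist (S.φ t ω x) (S.φ t ω y) < ε := by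
  have hz := S.markov ε (S.nat_mem k) (x, y)
  simp only [f_zero h hε, lintegral_zero] at hz
  rw [ae_iff]
  refine measure_mono_null ?_ hz
  intro ω hω r hr
  by_contra hlt
  push Not at hlt
  apply hω
  refine ⟨k + r, S.add_mem (S.nat_mem k) hr, by linarith [S.nonneg_of_mem hr], ?_⟩
  rw [S.φ_cocycle k (S.nat_mem k) r hr, S.φ_cocycle k (S.nat_mem k) r hr]
  exact hlt

end RDS

end ProofHelpers

/-- if `φ` is contractible then for any `x y`, almost every `ω` admits an unbounded
increasing sequence of times along which the two trajectories approach each other. -/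
theorem contractible_ae_exists_unbounded_increasing_times
    {Ω : Type} [MeasurableSpace Ω] (S : RDS Ω) (h : S.Contractible)
    (x y : UnitAddCircle) :
    ∀ᵐ ω ∂S.P, ∃ tn : ℕ → ℝ, (∀ n, tn n ∈ S.T) ∧ Monotone tn ∧
      Tendsto tn atTop atTop ∧
      Tendsto (fun n => dist (S.φ (tn n) ω x) (S.φ (tn n) ω y)) atTop (𝓝 0) := by
  have hae : ∀ᵐ ω ∂S.P, ∀ n k : ℕ, ∃ t ∈ S.T, (k : ℝ) ≤ t ∧
      dist (S.φ t ω x) (S.φ t ω y) < 1 / ((n : ℝ) + 1) :=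
    ae_all_iff.2 fun n => ae_all_iff.2 fun k =>
      RDS.ae_close h Nat.one_div_pos_of_nat k x y
  filter_upwards [hae] with ω hω
  choose τ hτ1 hτ2 hτ3 using hω
  let u : ℕ → ℝ := fun n => Nat.rec (τ 0 0) (fun n a => τ (n + 1) (⌈a⌉₊ + n + 1)) n
  have hu : ∀ n, u (n + 1) = τ (n + 1) (⌈u n⌉₊ + n + 1) := fun n => rfl
  have hform : ∀ n, ∃ k : ℕ, n ≤ k ∧ u n = τ n k := by
    intro n
    cases n with
    | zero => exact ⟨0, le_rfl, rfl⟩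
    | succ n => exact ⟨_, by omega, hu n⟩
  refine ⟨u, fun n => ?_, monotone_nat_of_le_succ fun n => ?_, ?_, ?_⟩
  · obtain ⟨k, -, e⟩ := hform n
    rw [e]; exact hτ1 _ _
  · rw [hu]
    refine le_trans ?_ (hτ2 _ _)
    push_cast
    linarith [Nat.le_ceil (u n), (Nat.cast_nonneg n : (0 : ℝ) ≤ n)]
  · refine tendsto_atTop_mono (fun n => ?_) tendsto_natCast_atTop_atTop
    obtain ⟨k, hk, e⟩ := hform n
    rw [e]
    exact le_trans (by exact_mod_cast hk) (hτ2 n k)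
  · refine squeeze_zero (fun _ => dist_nonneg) (fun n => ?_)
      tendsto_one_div_add_atTop_nhds_zero_nat
    obtain ⟨k, hk, e⟩ := hform n
    rw [e]
    exact (hτ3 n k).le
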